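/- Let k ∈ ℕ, let φ₁, …, φ_k, ψ₁, …, ψ_k, φ, ψ be positive modal formulas. Then the following are equivalent: (a) for every GLD-algebra B (regarded as a modal distributive lattice via ◇x = ¬□¬x) and every valuation v on B, if v(φᵢ) ≤ v(ψᵢ) for all i = 1, …, k then v(φ) ≤ v(ψ); (b) for every GLD-lattice A and every valuation v on A, if v(φᵢ) ≤ v(ψᵢ) for all i = 1, …, k then v(φ) ≤ v(ψ). -/

import Mathlib

/-!
Every GLD-algebra is a GLD-lattice, because meets in a Boolean algebra distribute over all existing
joins; this gives one direction. For the other, every GLD-lattice `A` embeds, as a modal lattice,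
into a GLD-algebra, so a quasi-identity passes from GLD-algebras to `A`.

The embedding is a canonical-frame construction restricted to points of finite depth. Points
are the prime filters of `A` containing some `□ⁿ⊥`, represented by their complementary prime ideals
`J`. A point `Q` is accessible from `P` when `□a ∈ P` implies `a ∈ Q`, and `a ∈ Q` implies
`◇a ∈ P`. Accessibility is transitive, and any prime filter accessible from a point is a point of
smaller depth, so the powerset of the set of points with the usual box is a GLD-algebra, the union
of the `□ⁿ⊥` being everything. The map `a ↦ {P | a ∈ P}` preserves `□` and `◇` by the usual prime
filter argument, which rests on the two mixed inequalities. It reflects the order: if `a ≰ b`, then,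
`a` being the join of the `a ⊓ □ⁿ⊥`, some `a ⊓ □ⁿ⊥ ≰ b`, and a prime filter containing
`a ⊓ □ⁿ⊥` but not `b` is a point.
-/

/-- Positive modal formulas, built from propositional variables and `⊥`, `⊤`
by `∨`, `∧`, `◇`, `□`. -/
inductive PosForm : Type
  | var : ℕ → PosForm
  | bot : PosForm
  | top : PosForm
  | or : PosForm → PosForm → PosForm
  | and : PosForm → PosForm → PosForm
  | dia : PosForm → PosForm
  | box : PosForm → PosForm

/-- The value of a positive modal formula in a bounded lattice equipped with
operations `box` and `dia`, under a valuation `v` of the variables. -/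
def PosForm.eval {A : Type*} [Lattice A] [BoundedOrder A]
    (box dia : A → A) (v : ℕ → A) : PosForm → A
  | .var p => v p
  | .bot => ⊥
  | .top => ⊤
  | .or φ ψ => PosForm.eval box dia v φ ⊔ PosForm.eval box dia v ψ
  | .and φ ψ => PosForm.eval box dia v φ ⊓ PosForm.eval box dia v ψ
  | .dia φ => dia (PosForm.eval box dia v φ)
  | .box φ => box (PosForm.eval box dia v φ)

/-- A GLD-lattice structure on a bounded distributive lattice `A`, given by the
modal operations `box` and `dia`. -/
structure IsGLDLattice {A : Type*} [DistribLattice A] [BoundedOrder A]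
    (box dia : A → A) : Prop where
  box_top : box ⊤ = ⊤
  dia_bot : dia ⊥ = ⊥
  box_sup_le : ∀ x y : A, box (x ⊔ y) ≤ box x ⊔ dia y
  inf_dia_le : ∀ x y : A, box x ⊓ dia y ≤ dia (x ⊓ y)
  dia_sup : ∀ x y : A, dia (x ⊔ y) = dia x ⊔ dia y
  box_inf : ∀ x y : A, box (x ⊓ y) = box x ⊓ box y
  dia_dia_le : ∀ x : A, dia (dia x) ≤ dia x
  box_le_box_box : ∀ x : A, box x ≤ box (box x)
  isLUB_inf_boxIter : ∀ x : A, IsLUB {y : A | ∃ n : ℕ, y = x ⊓ box^[n] ⊥} x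
  isGLB_sup_diaIter : ∀ x : A, IsGLB {y : A | ∃ n : ℕ, y = x ⊔ dia^[n] ⊤} x

/-- A GLD-algebra structure on a Boolean algebra `A`, given by the modal
operation `box`. -/
structure IsGLDAlgebra {A : Type*} [BooleanAlgebra A] (box : A → A) : Prop where
  box_top : box ⊤ = ⊤
  box_inf : ∀ x y : A, box (x ⊓ y) = box x ⊓ box y
  box_le_box_box : ∀ x : A, box x ≤ box (box x)
  isLUB_boxIter : IsLUB {y : A | ∃ n : ℕ, y = box^[n] ⊥} ⊤

/-! ### GLD-algebras are GLD-lattices -/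

theorem isGLDLattice_of_isGLDAlgebra {B : Type*} [BooleanAlgebra B] {box : B → B}
    (h : IsGLDAlgebra box) : IsGLDLattice box (fun x => (box xᶜ)ᶜ) := by
  have mono : Monotone box := fun x y hxy => by
    have := h.box_inf x y
    rw [inf_eq_left.2 hxy] at this
    exact inf_eq_left.1 this.symm
  -- The general form of both mixed inequalities, in terms of `□` alone.
  have key : ∀ x y z : B, x ⊓ y ≤ z → box x ⊓ box y ≤ box z := fun x y z hxyz =>
    (h.box_inf x y).symm.le.trans (mono hxyz)
  have iter : ∀ n : ℕ, (fun x => (box xᶜ)ᶜ)^[n] (⊤ : B) = (box^[n] ⊥)ᶜ := by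
    intro n
    induction n with
    | zero => simp
    | succ n ih => rw [Function.iterate_succ_apply', Function.iterate_succ_apply', ih, compl_compl]
  -- Relative complementation turns a bound of all `x ⊓ □ⁿ⊥` into a bound of all `□ⁿ⊥`.
  have lub : ∀ x u : B, (∀ n : ℕ, x ⊓ box^[n] ⊥ ≤ u) → x ≤ u := by
    intro x u hu
    have : (⊤ : B) ≤ x ⇨ u := h.isLUB_boxIter.2 (by
      rintro _ ⟨n, rfl⟩
      exact le_himp_iff.2 (inf_comm x _ ▸ hu n))
    simpa using this
  refine ⟨h.box_top, by simp [h.box_top], ?_, ?_, ?_, h.box_inf, ?_, h.box_le_box_box, ?_, ?_⟩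
  · intro x y
    have := key (x ⊔ y) yᶜ x (by rw [inf_sup_right]; simp)
    change _ ≤ box x ⊔ (box yᶜ)ᶜ
    rw [← himp_eq]
    exact le_himp_iff.2 this
  · intro x y
    have := key x (x ⊓ y)ᶜ yᶜ (by rw [compl_inf, inf_sup_left]; simp)
    change box x ⊓ (box yᶜ)ᶜ ≤ (box (x ⊓ y)ᶜ)ᶜ
    rw [le_compl_iff_disjoint_right, disjoint_iff_inf_le]
    calc box x ⊓ (box yᶜ)ᶜ ⊓ box (x ⊓ y)ᶜ = (box x ⊓ box (x ⊓ y)ᶜ) ⊓ (box yᶜ)ᶜ := by ac_rfl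
      _ ≤ box yᶜ ⊓ (box yᶜ)ᶜ := inf_le_inf_right _ this
      _ ≤ ⊥ := by simp
  · intro x y
    simp [h.box_inf, compl_sup, compl_inf]
  · intro x
    simpa using h.box_le_box_box xᶜ
  · intro x
    refine ⟨?_, fun u hu => lub x u fun n => hu ⟨n, rfl⟩⟩
    rintro _ ⟨n, rfl⟩
    exact inf_le_left
  · intro x
    refine ⟨?_, fun u hu => ?_⟩
    · rintro _ ⟨n, rfl⟩
      exact le_sup_left
    · refine compl_le_compl_iff_le.1 (lub xᶜ uᶜ fun n => ?_)
      have := compl_le_compl (hu ⟨n, rfl⟩)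
      rwa [compl_sup, iter, compl_compl] at this

/-! ### Prime filter separation -/

/-- The prime ideal theorem for a filter and an ideal given as sets with closure properties. -/
theorem exists_isPrime_separating {A : Type*} [DistribLattice A] [BoundedOrder A] (F I : Set A)
    (hFtop : ⊤ ∈ F) (hFup : ∀ x y, x ≤ y → x ∈ F → y ∈ F)
    (hFinf : ∀ x y, x ∈ F → y ∈ F → x ⊓ y ∈ F)
    (hIbot : ⊥ ∈ I) (hIdown : ∀ x y, x ≤ y → y ∈ I → x ∈ I)
    (hIsup : ∀ x y, x ∈ I → y ∈ I → x ⊔ y ∈ I)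
    (hdisj : ∀ x, x ∈ F → x ∈ I → False) :
    ∃ J : Order.Ideal A, J.IsPrime ∧ (∀ x ∈ I, x ∈ J) ∧ (∀ x ∈ F, x ∉ J) := by
  have hF : Order.IsPFilter F := Order.IsPFilter.of_def ⟨⊤, hFtop⟩
    (fun x hx y hy => ⟨x ⊓ y, hFinf x y hx hy, inf_le_left, inf_le_right⟩)
    (fun {x y} hxy hx => hFup x y hxy hx)
  have hI : Order.IsIdeal I :=
    ⟨fun y x hxy hy => hIdown x y hxy hy, ⟨⊥, hIbot⟩,
      fun x hx y hy => ⟨x ⊔ y, hIsup x y hx hy, le_sup_left, le_sup_right⟩⟩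
  obtain ⟨J, hJ, hIJ, hFJ⟩ := DistribLattice.prime_ideal_of_disjoint_filter_ideal
    (F := hF.toPFilter) (I := hI.toIdeal) (Set.disjoint_left.2 fun x hx hx' => hdisj x hx hx')
  exact ⟨J, hJ, fun x hx => hIJ hx, fun x hx hxJ => Set.disjoint_left.1 hFJ hx hxJ⟩

/-! ### The canonical frame of finite-depth points -/

/-- Prime filters of `A` containing some `□ⁿ⊥`, represented by the complementary prime ideals. -/
def FinPoint {A : Type*} [DistribLattice A] [BoundedOrder A] (box : A → A) : Type _ :=
  {J : Order.Ideal A // J.IsPrime ∧ ∃ n : ℕ, box^[n] ⊥ ∉ J}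

/-- Canonical accessibility, written in terms of complementary ideals: `□a ∈ P` implies `a ∈ Q`,
and `a ∈ Q` implies `◇a ∈ P`, for the prime filters `P`, `Q` complementary to the ideals `I`, `J`. -/
def CanonAcc {A : Type*} [DistribLattice A] [BoundedOrder A] (box dia : A → A)
    (I J : Order.Ideal A) : Prop :=
  (∀ a, box a ∉ I → a ∉ J) ∧ (∀ a, a ∉ J → dia a ∉ I)

/-- The box operation of the complex algebra of the canonical frame. -/
def canonBox {A : Type*} [DistribLattice A] [BoundedOrder A] (box dia : A → A)
    (S : Set (FinPoint box)) : Set (FinPoint box) :=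
  {P | ∀ Q : FinPoint box, CanonAcc box dia P.1 Q.1 → Q ∈ S}

/-- The representation map sending `a` to the set of points containing `a`. -/
def canonRep {A : Type*} [DistribLattice A] [BoundedOrder A] (box : A → A) (a : A) :
    Set (FinPoint box) :=
  {P | a ∉ P.1}

theorem isPrime_inf_notMem {A : Type*} [DistribLattice A] {J : Order.Ideal A} (hJ : J.IsPrime) {x y : A}
    (hx : x ∉ J) (hy : y ∉ J) : x ⊓ y ∉ J := fun hxy => (hJ.mem_or_mem hxy).elim hx hy

section
variable {A : Type*} [DistribLattice A] [BoundedOrder A] {box dia : A → A}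

theorem IsGLDLattice.box_mono (h : IsGLDLattice box dia) : Monotone box := fun x y hxy => by
  have := h.box_inf x y
  rw [inf_eq_left.2 hxy] at this
  exact inf_eq_left.1 this.symm

theorem IsGLDLattice.dia_mono (h : IsGLDLattice box dia) : Monotone dia := fun x y hxy => by
  have := h.dia_sup x y
  rw [sup_eq_right.2 hxy] at this
  exact sup_eq_right.1 this.symm

theorem isPrime_top_notMem {J : Order.Ideal A} (hJ : J.IsPrime) : ⊤ ∉ J := hJ.1.top_notMem

/-- Accessible prime filters have smaller depth, so finite depth is inherited. -/
theorem depth_of_canonAcc {I J : Order.Ideal A} (hacc : CanonAcc box dia I J) {n : ℕ}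
    (hn : box^[n] ⊥ ∉ I) : ∃ m, n = m + 1 ∧ box^[m] ⊥ ∉ J := by
  cases n with
  | zero => exact absurd I.bot_mem hn
  | succ m =>
    rw [Function.iterate_succ_apply'] at hn
    exact ⟨m, rfl, hacc.1 _ hn⟩

theorem exists_canonAcc_of_box_mem (h : IsGLDLattice box dia) (P : FinPoint box) {a : A}
    (ha : box a ∈ P.1) : ∃ Q : FinPoint box, CanonAcc box dia P.1 Q.1 ∧ a ∈ Q.1 := by
  obtain ⟨I, hI, n, hn⟩ := P
  change box a ∈ I at ha
  obtain ⟨J, hJ, hIJ, hFJ⟩ := exists_isPrime_separating {x | box x ∉ I}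
    {z | ∃ y, dia y ∈ I ∧ z ≤ a ⊔ y}
    (by simpa [h.box_top] using isPrime_top_notMem hI)
    (fun x y hxy hx hy => hx (I.lower (h.box_mono hxy) hy))
    (fun x y hx hy => by
      simp only [Set.mem_ofPred_eq, h.box_inf] at *
      exact isPrime_inf_notMem hI hx hy)
    ⟨⊥, by rw [h.dia_bot]; exact I.bot_mem, bot_le⟩
    (fun x y hxy ⟨z, hz, hyz⟩ => ⟨z, hz, hxy.trans hyz⟩)
    (fun x y ⟨z, hz, hxz⟩ ⟨w, hw, hyw⟩ => ⟨z ⊔ w, by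
      rw [h.dia_sup]; exact Order.Ideal.sup_mem hz hw,
      sup_le (hxz.trans (sup_le_sup_left le_sup_left _))
        (hyw.trans (sup_le_sup_left le_sup_right _))⟩)
    (fun x hx ⟨y, hy, hxy⟩ => hx (I.lower ((h.box_mono hxy).trans (h.box_sup_le a y))
      (Order.Ideal.sup_mem ha hy)))
  have hacc : CanonAcc box dia I J :=
    ⟨hFJ, fun y hy hd => hy (hIJ y ⟨y, hd, le_sup_right⟩)⟩
  obtain ⟨m, -, hm⟩ := depth_of_canonAcc hacc hn
  exact ⟨⟨J, hJ, m, hm⟩, hacc, hIJ a ⟨⊥, by rw [h.dia_bot]; exact I.bot_mem, le_sup_left⟩⟩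

theorem exists_canonAcc_of_dia_notMem (h : IsGLDLattice box dia) (P : FinPoint box) {a : A}
    (ha : dia a ∉ P.1) : ∃ Q : FinPoint box, CanonAcc box dia P.1 Q.1 ∧ a ∉ Q.1 := by
  obtain ⟨I, hI, n, hn⟩ := P
  change dia a ∉ I at ha
  have htop : box ⊤ ∉ I := by rw [h.box_top]; exact isPrime_top_notMem hI
  obtain ⟨J, hJ, hIJ, hFJ⟩ := exists_isPrime_separating {z | ∃ x, box x ∉ I ∧ x ⊓ a ≤ z}
    {y | dia y ∈ I}
    ⟨⊤, htop, le_top⟩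
    (fun x y hxy ⟨z, hz, hzx⟩ => ⟨z, hz, hzx.trans hxy⟩)
    (fun x y ⟨z, hz, hzx⟩ ⟨w, hw, hwy⟩ => ⟨z ⊓ w, by
      rw [h.box_inf]; exact isPrime_inf_notMem hI hz hw,
      le_inf ((inf_le_inf_right _ inf_le_left).trans hzx)
        ((inf_le_inf_right _ inf_le_right).trans hwy)⟩)
    (by simp [h.dia_bot])
    (fun x y hxy hy => I.lower (h.dia_mono hxy) hy)
    (fun x y hx hy => by
      simp only [Set.mem_ofPred_eq, h.dia_sup] at *
      exact Order.Ideal.sup_mem hx hy)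
    (fun y ⟨x, hx, hxy⟩ hy => isPrime_inf_notMem hI hx ha
      (I.lower ((h.inf_dia_le x a).trans (h.dia_mono hxy)) hy))
  have hacc : CanonAcc box dia I J :=
    ⟨fun x hx => hFJ x ⟨x, hx, inf_le_left⟩, fun y hy hd => hy (hIJ y hd)⟩
  obtain ⟨m, -, hm⟩ := depth_of_canonAcc hacc hn
  exact ⟨⟨J, hJ, m, hm⟩, hacc, hFJ a ⟨⊤, htop, inf_le_right⟩⟩

theorem canonAcc_trans (h : IsGLDLattice box dia) {I J K : Order.Ideal A}
    (hIJ : CanonAcc box dia I J) (hJK : CanonAcc box dia J K) : CanonAcc box dia I K :=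
  ⟨fun a ha => hJK.1 a (hIJ.1 _ fun hb => ha (I.lower (h.box_le_box_box a) hb)),
    fun a ha hd => hIJ.2 _ (hJK.2 a ha) (I.lower (h.dia_dia_le a) hd)⟩

theorem isGLDAlgebra_canonBox (h : IsGLDLattice box dia) :
    IsGLDAlgebra (canonBox box dia) := by
  refine ⟨?_, ?_, ?_, ?_⟩
  · exact Set.eq_univ_of_forall fun P Q _ => trivial
  · intro S T
    ext P
    exact ⟨fun hP => ⟨fun Q hQ => (hP Q hQ).1, fun Q hQ => (hP Q hQ).2⟩,
      fun hP Q hQ => ⟨hP.1 Q hQ, hP.2 Q hQ⟩⟩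
  · intro S P hP Q hQ R hR
    exact hP R (canonAcc_trans h hQ hR)
  · refine ⟨fun _ _ => le_top, fun U hU P _ => ?_⟩
    have depth : ∀ n : ℕ, ∀ P : FinPoint box, box^[n] ⊥ ∉ P.1 →
        P ∈ (canonBox box dia)^[n] ⊥ := by
      intro n
      induction n with
      | zero => exact fun P hP => absurd P.1.bot_mem hP
      | succ n ih =>
        intro P hP
        rw [Function.iterate_succ_apply']
        intro Q hQ
        obtain ⟨m, hm, hmQ⟩ := depth_of_canonAcc hQ hP
        obtain rfl : n = m := Nat.succ_injective hm
        exact ih Q hmQ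
    obtain ⟨n, hn⟩ := P.2.2
    exact hU ⟨n, rfl⟩ (depth n P hn)

theorem canonRep_eval (h : IsGLDLattice box dia) (v : ℕ → A) (φ : PosForm) :
    PosForm.eval (canonBox box dia) (fun x => (canonBox box dia xᶜ)ᶜ)
      (fun p => canonRep box (v p)) φ = canonRep box (PosForm.eval box dia v φ) := by
  induction φ with
  | var p => rfl
  | bot =>
    ext P
    exact ⟨fun hP => hP.elim, fun hP => hP P.1.bot_mem⟩
  | top =>
    ext P
    exact ⟨fun _ => isPrime_top_notMem P.2.1, fun _ => trivial⟩
  | or φ ψ ihφ ihψ =>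
    simp only [PosForm.eval, ihφ, ihψ]
    ext P
    change (_ ∉ P.1 ∨ _ ∉ P.1) ↔ _ ∉ P.1
    rw [Order.Ideal.sup_mem_iff, not_and_or]
  | and φ ψ ihφ ihψ =>
    simp only [PosForm.eval, ihφ, ihψ]
    ext P
    exact ⟨fun hP => isPrime_inf_notMem P.2.1 hP.1 hP.2,
      fun hP => ⟨fun hx => hP (P.1.lower inf_le_left hx),
        fun hx => hP (P.1.lower inf_le_right hx)⟩⟩
  | dia φ ih =>
    simp only [PosForm.eval, ih]
    ext P
    constructor
    · intro hP hd
      exact hP fun Q hQ hmem => hQ.2 _ hmem hd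
    · intro hP hbox
      obtain ⟨Q, hQ, hmem⟩ := exists_canonAcc_of_dia_notMem h P hP
      exact hbox Q hQ hmem
  | box φ ih =>
    simp only [PosForm.eval, ih]
    ext P
    constructor
    · intro hP hb
      obtain ⟨Q, hQ, hmem⟩ := exists_canonAcc_of_box_mem h P hb
      exact hP Q hQ hmem
    · exact fun hP Q hQ => hQ.1 _ hP

theorem canonRep_le_iff (h : IsGLDLattice box dia) {a b : A} :
    canonRep box a ≤ canonRep box b ↔ a ≤ b := by
  refine ⟨fun hab => (h.isLUB_inf_boxIter a).2 ?_, fun hab P hP hb => hP (P.1.lower hab hb)⟩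
  rintro _ ⟨n, rfl⟩
  by_contra hle
  obtain ⟨J, hJ, hbJ, hJn⟩ := exists_isPrime_separating (Set.Ici (a ⊓ box^[n] ⊥)) (Set.Iic b)
    le_top (fun x y hxy hx => le_trans hx hxy) (fun x y hx hy => le_inf hx hy)
    bot_le (fun x y hxy hy => le_trans hxy hy) (fun x y hx hy => sup_le hx hy)
    (fun x hx hx' => hle (le_trans hx hx'))
  exact hab (a := ⟨J, hJ, n, hJn _ inf_le_right⟩) (hJn _ inf_le_left) (hbJ b le_rfl)

end

/-! ### Transfer of quasi-identities -/

/-- A quasi-identity of positive modal formulas holds in all GLD-algebras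
(with `◇x = ¬□¬x`) iff it holds in all GLD-lattices. -/
theorem stmt10 (k : ℕ) (φs ψs : Fin k → PosForm) (φ ψ : PosForm) :
    (∀ (B : Type) [BooleanAlgebra B], ∀ box : B → B, IsGLDAlgebra box →
      ∀ v : ℕ → B,
        (∀ i : Fin k,
          PosForm.eval box (fun x => (box xᶜ)ᶜ) v (φs i) ≤
            PosForm.eval box (fun x => (box xᶜ)ᶜ) v (ψs i)) →
        PosForm.eval box (fun x => (box xᶜ)ᶜ) v φ ≤
          PosForm.eval box (fun x => (box xᶜ)ᶜ) v ψ)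
    ↔
    (∀ (A : Type) [DistribLattice A] [BoundedOrder A], ∀ box dia : A → A,
      IsGLDLattice box dia →
      ∀ v : ℕ → A,
        (∀ i : Fin k,
          PosForm.eval box dia v (φs i) ≤ PosForm.eval box dia v (ψs i)) →
        PosForm.eval box dia v φ ≤ PosForm.eval box dia v ψ) := by
  constructor
  · intro H A _ _ box dia h v hv
    have := H (Set (FinPoint box)) (canonBox box dia) (isGLDAlgebra_canonBox h)
      (fun p => canonRep box (v p)) (fun i => by
        rw [canonRep_eval h, canonRep_eval h]
        exact (canonRep_le_iff h).2 (hv i))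
    rw [canonRep_eval h, canonRep_eval h] at this
    exact (canonRep_le_iff h).1 this
  · intro H B _ box h v hv
    exact H B box _ (isGLDLattice_of_isGLDAlgebra h) v hv
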